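/- arXiv:1906.06872 — 2 statements merged into one kernel-verified Lean document; each statement's English description precedes it below -/
import Mathlib

section
/- (Weak duality for semilinear second order discrete systems, Example 3.1.) Let N ≥ 2, A₀, A₁ be n×n matrices, B an n×r matrix, U ⊆ ℝʳ nonempty, Q₀, Q₁ ⊆ ℝⁿ, and φ : ℝⁿ × ℝⁿ → ℝ ∪ {+∞}. Let {x_t}_{t=0}^N satisfy x_{t+2} = A₀x_t + A₁x_{t+1} + Bu_t with u_t ∈ U for t = 0,…,N−2, x₀ ∈ Q₀, x₁ ∈ Q₁. Let x*_t ∈ ℝⁿ (t = 0,…,N) satisfy the adjoint equation x*_t = A₀ᵀx*_{t+2} + A₁ᵀx*_{t+1} for t = 0,…,N−2. Then φ(x_{N−1}, x_N) ≥ −φ*(A₁ᵀx*_N − x*_{N−1}, −x*_N) − Σ_{t=0}^{N−2} W_U(Bᵀx*_{t+2}) − W_{Q₀}(x*₀ − A₁ᵀx*₁) − W_{Q₁}(x*₁), as an inequality in ℝ ∪ {±∞}. -/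
/-!
The pairing of two consecutive states of the system with the corresponding adjoint states drops by
exactly `⟨u t, Bᵀ x*_{t+2}⟩` at each step, because the adjoint equation is the transpose of the
dynamics. Telescoping expresses the pairing at the horizon, which is the linear part of the Fenchel
inequality for `φ`, through the controls and the initial states alone; the support functions bound
these remaining terms.
-/

open scoped RealInnerProductSpace Pointwise
open MeasureTheory Matrix

noncomputable section

abbrev En (n : ℕ) := EuclideanSpace ℝ (Fin n)

/-- Fenchel conjugate of an extended-real-valued function on a product of two
inner product spaces (inner product of pairs is the sum of componentwise inner products). -/
def fconj2 {V W : Type*} [NormedAddCommGroup V] [InnerProductSpace ℝ V]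
    [NormedAddCommGroup W] [InnerProductSpace ℝ W]
    (g : V × W → EReal) (u : V) (w : W) : EReal :=
  ⨆ p : V × W, ((⟪p.1, u⟫ + ⟪p.2, w⟫ : ℝ) : EReal) - g p

/-- Fenchel conjugate on a triple product. -/
def fconj3 {V : Type*} [NormedAddCommGroup V] [InnerProductSpace ℝ V]
    (g : V × V × V → EReal) (u₁ u₂ u₃ : V) : EReal :=
  ⨆ p : V × V × V,
    ((⟪p.1, u₁⟫ + ⟪p.2.1, u₂⟫ + ⟪p.2.2, u₃⟫ : ℝ) : EReal) - g p

/-- Fenchel conjugate on a finite power of an inner product space. -/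
def fconjPi {N : ℕ} {V : Type*} [NormedAddCommGroup V] [InnerProductSpace ℝ V]
    (g : (Fin N → V) → EReal) (u : Fin N → V) : EReal :=
  ⨆ w : Fin N → V, ((∑ i, ⟪w i, u i⟫ : ℝ) : EReal) - g w

/-- Support function `W_A`. -/
def suppFn {V : Type*} [NormedAddCommGroup V] [InnerProductSpace ℝ V]
    (A : Set V) (u : V) : EReal :=
  ⨆ x ∈ A, ((⟪x, u⟫ : ℝ) : EReal)

/-- The function `M_F(x*,y*,z*) = inf {⟨x,x*⟩+⟨y,y*⟩-⟨z,z*⟩ : (x,y,z) ∈ gph F}`. -/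
def MF {V : Type*} [NormedAddCommGroup V] [InnerProductSpace ℝ V]
    (F : V → V → Set V) (x' y' z' : V) : EReal :=
  ⨅ (x : V) (y : V) (z : V) (_ : z ∈ F x y),
    ((⟪x, x'⟫ + ⟪y, y'⟫ - ⟪z, z'⟫ : ℝ) : EReal)

/-- Hamiltonian `H_F(x,y,z*) = sup {⟨z,z*⟩ : z ∈ F(x,y)}` (`⊥` if `F(x,y) = ∅`). -/
def HF {V : Type*} [NormedAddCommGroup V] [InnerProductSpace ℝ V]
    (F : V → V → Set V) (x y z' : V) : EReal :=
  ⨆ z ∈ F x y, ((⟪z, z'⟫ : ℝ) : EReal)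

/-- Locally adjoint mapping `F*(z*;(x,y,·))`. -/
def LAM {V : Type*} [NormedAddCommGroup V] [InnerProductSpace ℝ V]
    (F : V → V → Set V) (z' x y : V) : Set (V × V) :=
  {p | ∀ x₁ y₁ : V, HF F x₁ y₁ z' - HF F x y z' ≤
    ((⟪p.1, x₁ - x⟫ + ⟪p.2, y₁ - y⟫ : ℝ) : EReal)}

/-- Argmaximum set `F_A(x,y,z*)`. -/
def FA {V : Type*} [NormedAddCommGroup V] [InnerProductSpace ℝ V]
    (F : V → V → Set V) (x y z' : V) : Set V :=
  {z ∈ F x y | ((⟪z, z'⟫ : ℝ) : EReal) = HF F x y z'}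

/-- Subdifferential of an extended-real-valued function on a product of two spaces. -/
def subdiff2 {V W : Type*} [NormedAddCommGroup V] [InnerProductSpace ℝ V]
    [NormedAddCommGroup W] [InnerProductSpace ℝ W]
    (g : V × W → EReal) (u : V × W) : Set (V × W) :=
  {p | ∀ v : V × W,
    ((⟪p.1, v.1 - u.1⟫ + ⟪p.2, v.2 - u.2⟫ : ℝ) : EReal) ≤ g v - g u}

/-- Subdifferential of a real-valued function on a product of two spaces. -/
def subdiffR2 {V W : Type*} [NormedAddCommGroup V] [InnerProductSpace ℝ V]
    [NormedAddCommGroup W] [InnerProductSpace ℝ W]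
    (g : V × W → ℝ) (u : V × W) : Set (V × W) :=
  {p | ∀ v : V × W, ⟪p.1, v.1 - u.1⟫ + ⟪p.2, v.2 - u.2⟫ ≤ g v - g u}

/-- Dual cone to the cone of tangent directions of a convex set `Q` at `x₀`. -/
def Kstar {V : Type*} [NormedAddCommGroup V] [InnerProductSpace ℝ V]
    (Q : Set V) (x₀ : V) : Set V :=
  {x' | ∀ x ∈ Q, 0 ≤ ⟪x', x - x₀⟫}

/-- Graph of a set-valued mapping. -/
def gph {V : Type*} (F : V → V → Set V) : Set (V × V × V) :=
  {p | p.2.2 ∈ F p.1 p.2.1}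

/-- Convexity of an extended-real-valued function. -/
def ERealConvexOn {V : Type*} [AddCommGroup V] [Module ℝ V] (g : V → EReal) : Prop :=
  ∀ x y : V, ∀ a b : ℝ, 0 ≤ a → 0 ≤ b → a + b = 1 →
    g (a • x + b • y) ≤ (a : EReal) * g x + (b : EReal) * g y

/-- `g` is absolutely continuous on `[0,1]` with derivative `g' ∈ L¹`. -/
def AC {n : ℕ} (g g' : ℝ → En n) : Prop :=
  MeasureTheory.IntegrableOn g' (Set.Icc (0 : ℝ) 1) ∧
    ∀ t ∈ Set.Icc (0 : ℝ) 1, g t = g 0 + ∫ s in (0 : ℝ)..t, g' s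

/-- Feasible trajectory of the continuous problem `(P_C)`. -/
structure FeasTraj {n : ℕ} (F : ℝ → En n → En n → Set (En n)) (Q₀ Q₁ : Set (En n))
    (x x' x'' : ℝ → En n) : Prop where
  int' : MeasureTheory.IntegrableOn x' (Set.Icc (0 : ℝ) 1)
  int'' : MeasureTheory.IntegrableOn x'' (Set.Icc (0 : ℝ) 1)
  hx : ∀ t ∈ Set.Icc (0 : ℝ) 1, x t = x 0 + ∫ s in (0 : ℝ)..t, x' s
  hx' : ∀ t ∈ Set.Icc (0 : ℝ) 1, x' t = x' 0 + ∫ s in (0 : ℝ)..t, x'' s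
  incl : ∀ᵐ t ∂(MeasureTheory.volume.restrict (Set.Icc (0 : ℝ) 1)), x'' t ∈ F t (x t) (x' t)
  q0 : x 0 ∈ Q₀
  q1 : x' 0 ∈ Q₁

theorem coe_sub_le_of_coe_sub_le {c : ℝ} {a b : EReal} (h : c - a ≤ b) : c - b ≤ a := by
  have hneg : -b ≤ a - c := by
    rw [sub_eq_add_neg, add_comm,
      ← EReal.neg_sub (.inl (EReal.coe_ne_bot c)) (.inl (EReal.coe_ne_top c))]
    exact EReal.neg_le_neg_iff.2 h
  rw [sub_eq_add_neg, add_comm]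
  exact EReal.add_le_of_le_sub hneg

section InnerProductSpace

variable {V W : Type*} [NormedAddCommGroup V] [InnerProductSpace ℝ V]
  [NormedAddCommGroup W] [InnerProductSpace ℝ W]

theorem inner_add_inner_sub_fconj2_le (g : V × W → EReal) (p : V × W) (u : V) (w : W) :
    ((⟪p.1, u⟫ + ⟪p.2, w⟫ : ℝ) : EReal) - fconj2 g u w ≤ g p :=
  coe_sub_le_of_coe_sub_le <|
    le_iSup (fun q : V × W ↦ ((⟪q.1, u⟫ + ⟪q.2, w⟫ : ℝ) : EReal) - g q) p

theorem inner_le_suppFn {A : Set V} {a : V} (ha : a ∈ A) (u : V) :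
    ((⟪a, u⟫ : ℝ) : EReal) ≤ suppFn A u :=
  le_iSup₂ (f := fun x (_ : x ∈ A) ↦ ((⟪x, u⟫ : ℝ) : EReal)) a ha

theorem sum_inner_le_sum_suppFn {ι : Type*} (s : Finset ι) {A : ι → Set V} {a : ι → V}
    (ha : ∀ i ∈ s, a i ∈ A i) (u : ι → V) :
    ((∑ i ∈ s, ⟪a i, u i⟫ : ℝ) : EReal) ≤ ∑ i ∈ s, suppFn (A i) (u i) :=
  calc
    ((∑ i ∈ s, ⟪a i, u i⟫ : ℝ) : EReal) = ∑ i ∈ s, ((⟪a i, u i⟫ : ℝ) : EReal) :=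
      map_sum (⟨⟨Real.toEReal, EReal.coe_zero⟩, EReal.coe_add⟩ : ℝ →+ EReal) _ s
    _ ≤ ∑ i ∈ s, suppFn (A i) (u i) :=
      Finset.sum_le_sum fun i hi ↦ inner_le_suppFn (ha i hi) (u i)

/-- The pairing of the states `x t, x (t + 1)` with the adjoint states `x' t, x' (t + 1)` of a
second order recurrence in which `A₁'` is the adjoint of the coefficient of `x (t + 1)`. The signs
are chosen so that at the horizon it is the linear part of the Fenchel inequality for the terminal
cost. -/
def adjointPairing (A₁' : V →ₗ[ℝ] V) (x x' : ℕ → V) (t : ℕ) : ℝ :=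
  ⟪x t, A₁' (x' (t + 1)) - x' t⟫ + ⟪x (t + 1), -x' (t + 1)⟫

theorem adjointPairing_zero (A₁' : V →ₗ[ℝ] V) (x x' : ℕ → V) :
    adjointPairing A₁' x x' 0 = -⟪x 0, x' 0 - A₁' (x' 1)⟫ - ⟪x 1, x' 1⟫ := by
  rw [adjointPairing, zero_add, inner_neg_right, ← neg_sub (x' 0), inner_neg_right,
    ← sub_eq_add_neg]

variable {A₀ A₁ A₀' A₁' : V →ₗ[ℝ] V} {B : W →ₗ[ℝ] V} {B' : V →ₗ[ℝ] W}
  {x x' : ℕ → V} {u : ℕ → W}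

theorem adjointPairing_sub_adjointPairing_succ
    (hA₀ : LinearMap.IsAdjointPair (innerₗ V) (innerₗ V) A₀ A₀')
    (hA₁ : LinearMap.IsAdjointPair (innerₗ V) (innerₗ V) A₁ A₁')
    (hB : LinearMap.IsAdjointPair (innerₗ W) (innerₗ V) B B') {t : ℕ}
    (hdyn : x (t + 2) = A₀ (x t) + A₁ (x (t + 1)) + B (u t))
    (hadj : x' t = A₀' (x' (t + 2)) + A₁' (x' (t + 1))) :
    adjointPairing A₁' x x' t - adjointPairing A₁' x x' (t + 1) = ⟪u t, B' (x' (t + 2))⟫ := by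
  have hstate : ⟪x (t + 2), x' (t + 2)⟫ = ⟪x t, A₀' (x' (t + 2))⟫
      + ⟪x (t + 1), A₁' (x' (t + 2))⟫ + ⟪u t, B' (x' (t + 2))⟫ := by
    rw [hdyn, inner_add_left, inner_add_left]
    exact congrArg₂ (· + ·) (congrArg₂ (· + ·) (hA₀ _ _) (hA₁ _ _)) (hB _ _)
  have hadjoint : ⟪x t, x' t⟫ = ⟪x t, A₀' (x' (t + 2))⟫ + ⟪x t, A₁' (x' (t + 1))⟫ := by
    rw [hadj, inner_add_right]
  simp only [adjointPairing, inner_sub_right, inner_neg_right, add_assoc, Nat.reduceAdd]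
  linarith

theorem adjointPairing_eq_neg_sum_sub_sub
    (hA₀ : LinearMap.IsAdjointPair (innerₗ V) (innerₗ V) A₀ A₀')
    (hA₁ : LinearMap.IsAdjointPair (innerₗ V) (innerₗ V) A₁ A₁')
    (hB : LinearMap.IsAdjointPair (innerₗ W) (innerₗ V) B B') {M : ℕ}
    (hdyn : ∀ t < M, x (t + 2) = A₀ (x t) + A₁ (x (t + 1)) + B (u t))
    (hadj : ∀ t < M, x' t = A₀' (x' (t + 2)) + A₁' (x' (t + 1))) :
    adjointPairing A₁' x x' M = -(∑ t ∈ Finset.range M, ⟪u t, B' (x' (t + 2))⟫)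
      - ⟪x 0, x' 0 - A₁' (x' 1)⟫ - ⟪x 1, x' 1⟫ := by
  have htelescope : ∑ t ∈ Finset.range M, ⟪u t, B' (x' (t + 2))⟫ =
      adjointPairing A₁' x x' 0 - adjointPairing A₁' x x' M := by
    rw [← Finset.sum_range_sub']
    refine Finset.sum_congr rfl fun t ht ↦ ?_
    have htM := Finset.mem_range.1 ht
    exact (adjointPairing_sub_adjointPairing_succ hA₀ hA₁ hB (hdyn t htM) (hadj t htM)).symm
  rw [adjointPairing_zero] at htelescope
  linarith

theorem stmt13_general
    (hA₀ : LinearMap.IsAdjointPair (innerₗ V) (innerₗ V) A₀ A₀')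
    (hA₁ : LinearMap.IsAdjointPair (innerₗ V) (innerₗ V) A₁ A₁')
    (hB : LinearMap.IsAdjointPair (innerₗ W) (innerₗ V) B B')
    {U : Set W} {Q₀ Q₁ : Set V} (φ : V × V → EReal) {M : ℕ}
    (hu : ∀ t < M, u t ∈ U)
    (hdyn : ∀ t < M, x (t + 2) = A₀ (x t) + A₁ (x (t + 1)) + B (u t))
    (hx0 : x 0 ∈ Q₀) (hx1 : x 1 ∈ Q₁)
    (hadj : ∀ t < M, x' t = A₀' (x' (t + 2)) + A₁' (x' (t + 1))) :
    -fconj2 φ (A₁' (x' (M + 1)) - x' M) (-x' (M + 1))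
      - (∑ t ∈ Finset.range M, suppFn U (B' (x' (t + 2))))
      - suppFn Q₀ (x' 0 - A₁' (x' 1)) - suppFn Q₁ (x' 1) ≤ φ (x M, x (M + 1)) := by
  set F := fconj2 φ (A₁' (x' (M + 1)) - x' M) (-x' (M + 1))
  have hcontrols := sum_inner_le_sum_suppFn (Finset.range M) (A := fun _ ↦ U)
    (fun t ht ↦ hu t (Finset.mem_range.1 ht)) (fun t ↦ B' (x' (t + 2)))
  calc
    _ ≤ -F - ((∑ t ∈ Finset.range M, ⟪u t, B' (x' (t + 2))⟫ : ℝ) : EReal)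
        - ((⟪x 0, x' 0 - A₁' (x' 1)⟫ : ℝ) : EReal) - ((⟪x 1, x' 1⟫ : ℝ) : EReal) :=
      EReal.sub_le_sub (EReal.sub_le_sub (EReal.sub_le_sub le_rfl hcontrols)
        (inner_le_suppFn hx0 _)) (inner_le_suppFn hx1 _)
    _ = (adjointPairing A₁' x x' M : EReal) - F := by
      rw [adjointPairing_eq_neg_sum_sub_sub hA₀ hA₁ hB hdyn hadj, EReal.coe_sub, EReal.coe_sub,
        EReal.coe_neg, sub_eq_add_neg _ F, add_comm, add_sub_assoc', add_sub_assoc',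
        ← sub_eq_add_neg]
    _ ≤ φ (x M, x (M + 1)) := inner_add_inner_sub_fconj2_le φ (x M, x (M + 1)) _ _

end InnerProductSpace

theorem isAdjointPair_toEuclideanLin_transpose {m k : Type*} [Fintype m] [Fintype k]
    [DecidableEq m] [DecidableEq k] (A : Matrix m k ℝ) :
    LinearMap.IsAdjointPair (innerₗ (EuclideanSpace ℝ k)) (innerₗ (EuclideanSpace ℝ m))
      (Matrix.toEuclideanLin A) (Matrix.toEuclideanLin Aᵀ) := by
  intro v w
  rw [innerₗ_apply_apply, innerₗ_apply_apply, ← Matrix.conjTranspose_eq_transpose_of_trivial,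
    Matrix.toEuclideanLin_conjTranspose_eq_adjoint, LinearMap.adjoint_inner_right]

/-- weak duality for semilinear second order discrete systems
(Example 3.1). -/
theorem stmt13 {n r N : ℕ} (hN : 2 ≤ N)
    (A₀ A₁ : Matrix (Fin n) (Fin n) ℝ) (B : Matrix (Fin n) (Fin r) ℝ)
    (U : Set (En r)) (hU : U.Nonempty) (Q₀ Q₁ : Set (En n))
    (φ : En n × En n → EReal)
    (x : ℕ → En n) (u : ℕ → En r)
    (hu : ∀ t, t ≤ N - 2 → u t ∈ U)
    (hdyn : ∀ t, t ≤ N - 2 → x (t + 2) =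
      Matrix.toEuclideanLin A₀ (x t) + Matrix.toEuclideanLin A₁ (x (t + 1)) +
        Matrix.toEuclideanLin B (u t))
    (hx0 : x 0 ∈ Q₀) (hx1 : x 1 ∈ Q₁)
    (x' : ℕ → En n)
    (hadj : ∀ t, t ≤ N - 2 → x' t =
      Matrix.toEuclideanLin A₀ᵀ (x' (t + 2)) + Matrix.toEuclideanLin A₁ᵀ (x' (t + 1))) :
    -(fconj2 φ (Matrix.toEuclideanLin A₁ᵀ (x' N) - x' (N - 1)) (-(x' N)))
      - (∑ t ∈ Finset.range (N - 1), suppFn U (Matrix.toEuclideanLin Bᵀ (x' (t + 2))))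
      - suppFn Q₀ (x' 0 - Matrix.toEuclideanLin A₁ᵀ (x' 1)) - suppFn Q₁ (x' 1)
      ≤ φ (x (N - 1), x N) := by
  obtain ⟨M, rfl⟩ := Nat.exists_eq_add_of_le' hN
  exact stmt13_general (isAdjointPair_toEuclideanLin_transpose A₀)
    (isAdjointPair_toEuclideanLin_transpose A₁) (isAdjointPair_toEuclideanLin_transpose B) φ
    (fun t ht ↦ hu t (Nat.le_of_lt_succ ht)) (fun t ht ↦ hdyn t (Nat.le_of_lt_succ ht)) hx0 hx1
    (fun t ht ↦ hadj t (Nat.le_of_lt_succ ht))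
end
end

section
/- (Strong duality part of Theorem 5.2.) Let F(·,t) : ℝⁿ × ℝⁿ ⇉ ℝⁿ be convex set-valued mappings for t ∈ [0,1], Q₀, Q₁ ⊆ ℝⁿ nonempty convex sets, and φ : ℝⁿ × ℝⁿ → ℝ convex and continuous. Let x̃ be a feasible trajectory of (P_C) and let x̃*, ṽ* : [0,1] → ℝⁿ (x̃*, x̃*' absolutely continuous with x̃*'' ∈ L¹, ṽ* absolutely continuous with ṽ*' ∈ L¹) satisfy, for a.e. t ∈ [0,1]: (a) (x̃*''(t) + ṽ*'(t), ṽ*(t)) ∈ F*(x̃*(t); (x̃(t), x̃'(t), x̃''(t)), t); (b) x̃''(t) ∈ F_A(x̃(t), x̃'(t), x̃*(t), t); (c) ṽ*(0) + x̃*'(0) ∈ K*_{Q₀}(x̃(0)) and −x̃*(0) ∈ K*_{Q₁}(x̃'(0)); (d) (ṽ*(1) + x̃*'(1), −x̃*(1)) ∈ ∂φ(x̃(1), x̃'(1)). Then t ↦ M_{F(·,t)}(x̃*''(t) + ṽ*'(t), ṽ*(t), x̃*(t)) is a.e. equal to an integrable function and −φ*(ṽ*(1) + x̃*'(1), −x̃*(1))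 + ∫₀¹ M_{F(·,t)}(x̃*''(t) + ṽ*'(t), ṽ*(t), x̃*(t)) dt − W_{Q₀}(−ṽ*(0) − x̃*'(0)) − W_{Q₁}(x̃*(0)) = φ(x̃(1), x̃'(1)); in particular the optimal values of the primal problem (P_C) and its dual coincide. -/
/-!
Put `p = ṽ* + x̃*'` and `q = x̃*`. Each of the conditions (a)–(d) says that `x̃` attains an
extremum: (a) and (b) the infimum `M_F`, (c) the two support functions, and (d) the supremum `φ*`,
by equality in the Fenchel–Young inequality. Along `x̃` the integrand `M_F` is the derivative of
`⟪x̃, p⟫ - ⟪x̃', q⟫`, so its integral is a difference of boundary terms, which cancel against those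
in the support functions and in `φ*` and leave `φ(x̃(1), x̃'(1))`.
-/

open scoped RealInnerProductSpace Pointwise
open MeasureTheory Matrix

noncomputable section

section AbsoluteContinuity

variable {X Y : Type*} [PseudoMetricSpace X] [PseudoMetricSpace Y] {a b : ℝ}

theorem absolutelyContinuousOnInterval_of_dist_le {f : ℝ → X} {g : ℝ → Y}
    (hg : AbsolutelyContinuousOnInterval g a b)
    (hfg : ∀ s ∈ Set.uIcc a b, ∀ t ∈ Set.uIcc a b, dist (f s) (f t) ≤ dist (g s) (g t)) :
    AbsolutelyContinuousOnInterval f a b := by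
  rw [absolutelyContinuousOnInterval_iff] at hg ⊢
  intro ε hε
  obtain ⟨δ, hδ, h⟩ := hg ε hε
  refine ⟨δ, hδ, fun I hI hIδ => (Finset.sum_le_sum fun i hi => ?_).trans_lt (h I hI hIδ)⟩
  exact hfg _ (hI.1 i hi).1 _ (hI.1 i hi).2

variable {E : Type*} [NormedAddCommGroup E]

theorem absolutelyContinuousOnInterval_norm {f : ℝ → E}
    (hf : AbsolutelyContinuousOnInterval f a b) :
    AbsolutelyContinuousOnInterval (fun t => ‖f t‖) a b :=
  absolutelyContinuousOnInterval_of_dist_le hf fun s _ t _ =>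
    (dist_norm_norm_le (f s) (f t)).trans_eq (dist_eq_norm _ _).symm

theorem absolutelyContinuousOnInterval_inner [InnerProductSpace ℝ E] {f g : ℝ → E}
    (hf : AbsolutelyContinuousOnInterval f a b) (hg : AbsolutelyContinuousOnInterval g a b) :
    AbsolutelyContinuousOnInterval (fun t => ⟪f t, g t⟫) a b := by
  have polarization (t : ℝ) : ⟪f t, g t⟫ =
      (1 / 4 : ℝ) * (‖f t + g t‖ * ‖f t + g t‖ - ‖f t - g t‖ * ‖f t - g t‖) := by
    rw [norm_add_mul_self_real, norm_sub_mul_self_real]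
    ring
  have hadd := absolutelyContinuousOnInterval_norm (hf.fun_add hg)
  have hsub := absolutelyContinuousOnInterval_norm (hf.fun_sub hg)
  simp only [polarization]
  exact ((hadd.fun_mul hadd).fun_sub (hsub.fun_mul hsub)).const_mul _

end AbsoluteContinuity

/-- `f` is an indefinite integral of the integrable function `f'` on `[a, b]`, the interval version
of `AC`: in finite dimension these are the absolutely continuous functions with derivative `f'`.
For `b < a` the condition is void. -/
def IsPrimitiveOn {E : Type*} [NormedAddCommGroup E] [NormedSpace ℝ E] (f f' : ℝ → E) (a b : ℝ) :
    Prop :=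
  IntegrableOn f' (Set.Icc a b) ∧ ∀ t ∈ Set.Icc a b, f t = f a + ∫ s in a..t, f' s

namespace IsPrimitiveOn

variable {E : Type*} [NormedAddCommGroup E] [NormedSpace ℝ E] {f f' g g' : ℝ → E} {a b s t : ℝ}

theorem intervalIntegrable (hf : IsPrimitiveOn f f' a b) (hs : s ∈ Set.Icc a b)
    (ht : t ∈ Set.Icc a b) : IntervalIntegrable f' volume s t :=
  (hf.1.mono_set (Set.uIcc_subset_Icc hs ht)).intervalIntegrable

theorem sub_eq_integral (hf : IsPrimitiveOn f f' a b) (hs : s ∈ Set.Icc a b)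
    (ht : t ∈ Set.Icc a b) : f t - f s = ∫ u in s..t, f' u := by
  have ha : a ∈ Set.Icc a b := Set.left_mem_Icc.2 (hs.1.trans hs.2)
  rw [hf.2 s hs, hf.2 t ht, add_sub_add_left_eq_sub,
    intervalIntegral.integral_interval_sub_left (hf.intervalIntegrable ha ht)
      (hf.intervalIntegrable ha hs)]

theorem setIntegral_eq_sub (hf : IsPrimitiveOn f f' a b) (hab : a ≤ b) :
    ∫ t in Set.Icc a b, f' t = f b - f a := by
  rw [integral_Icc_eq_integral_Ioc, ← intervalIntegral.integral_of_le hab,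
    hf.sub_eq_integral (Set.left_mem_Icc.2 hab) (Set.right_mem_Icc.2 hab)]

theorem sub (hf : IsPrimitiveOn f f' a b) (hg : IsPrimitiveOn g g' a b) :
    IsPrimitiveOn (fun t => f t - g t) (fun t => f' t - g' t) a b := by
  refine ⟨hf.1.sub hg.1, fun t ht => ?_⟩
  have ha : a ∈ Set.Icc a b := Set.left_mem_Icc.2 (ht.1.trans ht.2)
  have hInt := intervalIntegral.integral_sub (hf.intervalIntegrable ha ht)
    (hg.intervalIntegrable ha ht)
  simp only [hInt, hf.2 t ht, hg.2 t ht]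
  abel

theorem add (hf : IsPrimitiveOn f f' a b) (hg : IsPrimitiveOn g g' a b) :
    IsPrimitiveOn (fun t => f t + g t) (fun t => f' t + g' t) a b := by
  refine ⟨hf.1.add hg.1, fun t ht => ?_⟩
  have ha : a ∈ Set.Icc a b := Set.left_mem_Icc.2 (ht.1.trans ht.2)
  have hInt := intervalIntegral.integral_add (hf.intervalIntegrable ha ht)
    (hg.intervalIntegrable ha ht)
  simp only [hInt, hf.2 t ht, hg.2 t ht]
  abel

-- The comparison with `∫ ‖f'‖` reduces the claim to real-valued indefinite integrals.
theorem absolutelyContinuousOnInterval (hf : IsPrimitiveOn f f' a b) (hab : a ≤ b) :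
    AbsolutelyContinuousOnInterval f a b := by
  have ha : a ∈ Set.Icc a b := Set.left_mem_Icc.2 hab
  have hnorm {t : ℝ} (ht : t ∈ Set.Icc a b) : IntervalIntegrable (‖f' ·‖) volume a t :=
    (hf.intervalIntegrable ha ht).norm
  refine absolutelyContinuousOnInterval_of_dist_le
    ((hnorm (Set.right_mem_Icc.2 hab)).absolutelyContinuousOnInterval_intervalIntegral
      Set.left_mem_uIcc) ?_
  rw [Set.uIcc_of_le hab]
  intro s hs t ht
  calc dist (f s) (f t) = ‖∫ u in s..t, f' u‖ := by
        rw [dist_comm, dist_eq_norm, hf.sub_eq_integral hs ht]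
    _ ≤ |∫ u in s..t, ‖f' u‖| := intervalIntegral.norm_integral_le_abs_integral_norm
    _ = dist (∫ u in a..s, ‖f' u‖) (∫ u in a..t, ‖f' u‖) := by
        rw [dist_comm, Real.dist_eq,
          intervalIntegral.integral_interval_sub_left (hnorm ht) (hnorm hs)]

theorem ae_hasDerivAt [CompleteSpace E] (hf : IsPrimitiveOn f f' a b) (hab : a ≤ b) :
    ∀ᵐ t ∂volume.restrict (Set.Icc a b), HasDerivAt f (f' t) t := by
  rw [← Measure.restrict_congr_set Ioo_ae_eq_Icc, ae_restrict_iff' measurableSet_Ioo]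
  have hInt := hf.intervalIntegrable (Set.left_mem_Icc.2 hab) (Set.right_mem_Icc.2 hab)
  filter_upwards [hInt.ae_hasDerivAt_integral] with t hderiv ht
  have hmem : t ∈ Set.uIcc a b := Set.Icc_subset_uIcc (Set.Ioo_subset_Icc_self ht)
  refine ((hderiv hmem a Set.left_mem_uIcc).const_add (f a)).congr_of_eventuallyEq ?_
  filter_upwards [Icc_mem_nhds ht.1 ht.2] with s hs using hf.2 s hs

end IsPrimitiveOn

theorem isPrimitiveOn_of_ae_hasDerivAt {f f' : ℝ → ℝ} {a b : ℝ} (hab : a ≤ b)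
    (hf : AbsolutelyContinuousOnInterval f a b)
    (hf' : ∀ᵐ t ∂volume.restrict (Set.Icc a b), HasDerivAt f (f' t) t) :
    IsPrimitiveOn f f' a b := by
  have hderiv : deriv f =ᵐ[volume.restrict (Set.Icc a b)] f' := hf'.mono fun t ht => ht.deriv
  refine ⟨?_, fun t ht => ?_⟩
  · have hInt := (intervalIntegrable_iff_integrableOn_Icc_of_le hab).1 hf.intervalIntegrable_deriv
    exact hInt.congr_fun_ae hderiv
  · have hft : AbsolutelyContinuousOnInterval f a t :=
      hf.mono (Set.uIcc_subset_uIcc_left (Set.Icc_subset_uIcc ht))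
    have hsub : Set.uIoc a t ⊆ Set.Icc a b :=
      Set.uIoc_subset_uIcc.trans (Set.uIcc_subset_Icc (Set.left_mem_Icc.2 hab) ht)
    rw [← intervalIntegral.integral_congr_ae_restrict
      (ae_restrict_of_ae_restrict_of_subset hsub hderiv), hft.integral_deriv_eq_sub,
      add_sub_cancel]

theorem IsPrimitiveOn.inner {E : Type*} [NormedAddCommGroup E] [InnerProductSpace ℝ E]
    [CompleteSpace E] {f f' g g' : ℝ → E} {a b : ℝ} (hab : a ≤ b)
    (hf : IsPrimitiveOn f f' a b) (hg : IsPrimitiveOn g g' a b) :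
    IsPrimitiveOn (fun t => ⟪f t, g t⟫) (fun t => ⟪f t, g' t⟫ + ⟪f' t, g t⟫) a b := by
  refine isPrimitiveOn_of_ae_hasDerivAt hab (absolutelyContinuousOnInterval_inner
    (hf.absolutelyContinuousOnInterval hab) (hg.absolutelyContinuousOnInterval hab)) ?_
  filter_upwards [hf.ae_hasDerivAt hab, hg.ae_hasDerivAt hab] with t hft hgt
  exact hft.inner ℝ hgt

section Attainment

variable {V W : Type*} [NormedAddCommGroup V] [InnerProductSpace ℝ V]
  [NormedAddCommGroup W] [InnerProductSpace ℝ W]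

theorem MF_eq_of_mem_LAM_of_mem_FA {F : V → V → Set V} {x y z z' : V} {p : V × V}
    (hp : p ∈ LAM F z' x y) (hz : z ∈ FA F x y z') :
    MF F p.1 p.2 z' = ((⟪x, p.1⟫ + ⟪y, p.2⟫ - ⟪z, z'⟫ : ℝ) : EReal) := by
  refine le_antisymm (iInf₂_le_of_le x y (iInf₂_le z hz.1)) ?_
  refine le_iInf₂ fun x₁ y₁ => le_iInf₂ fun z₁ hz₁ => EReal.coe_le_coe_iff.2 ?_
  have hHF : ((⟪z₁, z'⟫ : ℝ) : EReal) ≤ HF F x₁ y₁ z' :=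
    le_iSup₂ (f := fun z (_ : z ∈ F x₁ y₁) => ((⟪z, z'⟫ : ℝ) : EReal)) z₁ hz₁
  have hLAM := (EReal.sub_le_sub hHF hz.2.ge).trans (hp x₁ y₁)
  rw [← EReal.coe_sub, EReal.coe_le_coe_iff, inner_sub_right, inner_sub_right,
    real_inner_comm x₁, real_inner_comm x, real_inner_comm y₁, real_inner_comm y] at hLAM
  linarith

theorem suppFn_neg_of_mem_Kstar {Q : Set V} {x u : V} (hx : x ∈ Q) (hu : u ∈ Kstar Q x) :
    suppFn Q (-u) = ((⟪x, -u⟫ : ℝ) : EReal) := by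
  refine le_antisymm (iSup₂_le fun y hy => EReal.coe_le_coe_iff.2 ?_)
    (le_iSup₂ (f := fun y (_ : y ∈ Q) => ((⟪y, -u⟫ : ℝ) : EReal)) x hx)
  have hyx := hu y hy
  rw [inner_sub_right, real_inner_comm y, real_inner_comm x] at hyx
  rw [inner_neg_right, inner_neg_right]
  linarith

theorem fconj2_eq_of_mem_subdiffR2 {φ : V × W → ℝ} {u p : V × W} (hp : p ∈ subdiffR2 φ u) :
    fconj2 (fun v => ((φ v : ℝ) : EReal)) p.1 p.2 =
      ((⟪u.1, p.1⟫ + ⟪u.2, p.2⟫ - φ u : ℝ) : EReal) := by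
  refine le_antisymm (iSup_le fun v => ?_) (le_iSup_of_le u (EReal.coe_sub _ _).le)
  rw [← EReal.coe_sub, EReal.coe_le_coe_iff]
  have hv := hp v
  rw [inner_sub_right, inner_sub_right, real_inner_comm v.1, real_inner_comm u.1,
    real_inner_comm v.2, real_inner_comm u.2] at hv
  linarith

end Attainment

theorem stmt16_general {E : Type*} [NormedAddCommGroup E] [InnerProductSpace ℝ E] [CompleteSpace E]
    {a b : ℝ} (hab : a ≤ b) {F : ℝ → E → E → Set E} {Q₀ Q₁ : Set E} {φ : E × E → ℝ}
    {x x' x'' p p' q q' : ℝ → E}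
    (hx : IsPrimitiveOn x x' a b) (hx' : IsPrimitiveOn x' x'' a b)
    (hp : IsPrimitiveOn p p' a b) (hq : IsPrimitiveOn q q' a b)
    (hQ₀ : x a ∈ Q₀) (hQ₁ : x' a ∈ Q₁)
    (hLAM : ∀ᵐ t ∂volume.restrict (Set.Icc a b),
      (p' t, p t - q' t) ∈ LAM (F t) (q t) (x t) (x' t))
    (hFA : ∀ᵐ t ∂volume.restrict (Set.Icc a b), x'' t ∈ FA (F t) (x t) (x' t) (q t))
    (hpa : p a ∈ Kstar Q₀ (x a)) (hqa : -q a ∈ Kstar Q₁ (x' a))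
    (hφ : (p b, -q b) ∈ subdiffR2 φ (x b, x' b)) :
    ∃ g : ℝ → ℝ, IntegrableOn g (Set.Icc a b) ∧
      (∀ᵐ t ∂volume.restrict (Set.Icc a b),
        MF (F t) (p' t) (p t - q' t) (q t) = ((g t : ℝ) : EReal)) ∧
      -(fconj2 (fun v => ((φ v : ℝ) : EReal)) (p b) (-q b))
          + ((∫ t in Set.Icc a b, g t : ℝ) : EReal)
          - suppFn Q₀ (-p a) - suppFn Q₁ (q a)
        = ((φ (x b, x' b) : ℝ) : EReal) := by
  have hprim := (hx.inner hab hp).sub (hx'.inner hab hq)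
  refine ⟨_, hprim.1, ?_, ?_⟩
  · filter_upwards [hLAM, hFA] with t ht hxt
    rw [MF_eq_of_mem_LAM_of_mem_FA ht hxt, inner_sub_right]
    congr 1
    ring
  · have hQ₁q := suppFn_neg_of_mem_Kstar hQ₁ hqa
    rw [neg_neg] at hQ₁q
    rw [hprim.setIntegral_eq_sub hab, fconj2_eq_of_mem_subdiffR2 hφ,
      suppFn_neg_of_mem_Kstar hQ₀ hpa, hQ₁q]
    norm_cast
    simp only [inner_neg_right]
    ring

/-- strong duality part of Theorem 5.2.  Here `xs, xs', xs''` stand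
for `xt*, xt*', xt*''` and `vs, vs'` for `ṽ*, ṽ*'`. -/
theorem stmt16 {n : ℕ}
    (F : ℝ → En n → En n → Set (En n))
    (hFconv : ∀ t ∈ Set.Icc (0 : ℝ) 1, Convex ℝ (gph (F t)))
    (Q₀ Q₁ : Set (En n)) (hQ₀c : Convex ℝ Q₀) (hQ₁c : Convex ℝ Q₁)
    (hQ₀ne : Q₀.Nonempty) (hQ₁ne : Q₁.Nonempty)
    (φ : En n × En n → ℝ) (hφconv : ConvexOn ℝ Set.univ φ) (hφcont : Continuous φ)
    (xt xt' xt'' : ℝ → En n) (hxt : FeasTraj F Q₀ Q₁ xt xt' xt'')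
    (xs xs' xs'' vs vs' : ℝ → En n)
    (hxsAC : AC xs xs') (hxs'AC : AC xs' xs'') (hvsAC : AC vs vs')
    (ha : ∀ᵐ t ∂(volume.restrict (Set.Icc (0 : ℝ) 1)),
      (xs'' t + vs' t, vs t) ∈ LAM (F t) (xs t) (xt t) (xt' t))
    (hb : ∀ᵐ t ∂(volume.restrict (Set.Icc (0 : ℝ) 1)),
      xt'' t ∈ FA (F t) (xt t) (xt' t) (xs t))
    (hc0 : vs 0 + xs' 0 ∈ Kstar Q₀ (xt 0))
    (hc1 : -(xs 0) ∈ Kstar Q₁ (xt' 0))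
    (hd : (vs 1 + xs' 1, -(xs 1)) ∈ subdiffR2 φ (xt 1, xt' 1)) :
    ∃ g : ℝ → ℝ, MeasureTheory.IntegrableOn g (Set.Icc (0 : ℝ) 1) ∧
      (∀ᵐ t ∂(volume.restrict (Set.Icc (0 : ℝ) 1)),
        MF (F t) (xs'' t + vs' t) (vs t) (xs t) = ((g t : ℝ) : EReal)) ∧
      -(fconj2 (fun p => ((φ p : ℝ) : EReal)) (vs 1 + xs' 1) (-(xs 1)))
          + (((∫ t in Set.Icc (0 : ℝ) 1, g t) : ℝ) : EReal)
          - suppFn Q₀ (-(vs 0) - xs' 0) - suppFn Q₁ (xs 0)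
        = ((φ (xt 1, xt' 1) : ℝ) : EReal) := by
  have hp : IsPrimitiveOn (fun t => vs t + xs' t) (fun t => xs'' t + vs' t) 0 1 := by
    simpa only [add_comm] using IsPrimitiveOn.add hvsAC hxs'AC
  simpa only [add_sub_cancel_right, neg_add'] using
    stmt16_general zero_le_one ⟨hxt.int', hxt.hx⟩ ⟨hxt.int'', hxt.hx'⟩ hp hxsAC hxt.q0 hxt.q1
      (by simpa only [add_sub_cancel_right] using ha) hb hc0 hc1 hd
end
end
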